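/- Let q be a prime power coprime to 3 with q ≡ 1 (mod 3). Then no two orthonormal bases of 𝔽_{q²}^3 are mutually unbiased to each other; that is, M_3(𝔽_{q²}) = 1. -/

import Mathlib

open Finset

/-- The σ-Hermitian inner product on `F^d`, where σ is the `q`-power Frobenius. -/
def hermInner {F : Type*} [Field F] (q : ℕ) {d : ℕ} (u v : Fin d → F) : F :=
  ∑ j, (u j) ^ q * v j

/-- Orthonormal basis: pairwise Hermitian inner products given by the Kronecker delta. -/
def IsON {F : Type*} [Field F] (q : ℕ) {d : ℕ} (b : Fin d → Fin d → F) : Prop :=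
  ∀ i j, hermInner q (b i) (b j) = if i = j then 1 else 0

/-- Mutually unbiased bases: all relative norms of cross inner products equal `(d : F)⁻¹`. -/
def IsMUB {F : Type*} [Field F] (q : ℕ) {d : ℕ} (b c : Fin d → Fin d → F) : Prop :=
  ∀ i j, (hermInner q (b i) (c j)) ^ (q + 1) = (d : F)⁻¹

/-!
The coefficients `xᵢ`, `yᵢ` of two orthogonal vectors of `C` in the basis `B` satisfy
`∑ σ(xᵢ) yᵢ = 0` by Parseval. The three summands `a`, `b`, `c` have a common nonzero relative norm
`n`, so `σ(a) = n / a`, and applying `σ` to `a + b + c = 0` gives `1/a + 1/b + 1/c = 0`. Thus the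
first two elementary symmetric functions of `a`, `b`, `c` vanish and their cubes coincide. Ratios of
the summands are therefore cube roots of unity of relative norm `1`; when `3 ∤ q + 1` only `1` is
such a root, so `a = b = c` and `3a = 0`.
-/

section SymmetricFunctions

variable {R : Type*} [CommRing R] {a b c : R}

lemma mul_add_mul_add_mul_eq_zero_of_map_mul_self_eq [NoZeroDivisors R] (σ : R →+* R) {n : R}
    (hn : n ≠ 0) (ha : σ a * a = n) (hb : σ b * b = n) (hc : σ c * c = n)
    (hsum : a + b + c = 0) : a * b + b * c + c * a = 0 := by
  have hσsum : σ a + σ b + σ c = 0 := by rw [← map_add, ← map_add, hsum, map_zero]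
  have hmul : n * (a * b + b * c + c * a) = 0 := by
    linear_combination (a * b * c) * hσsum - (b * c) * ha - (a * c) * hb - (a * b) * hc
  exact (mul_eq_zero.1 hmul).resolve_left hn

lemma pow_three_eq_pow_three_of_symmetric_eq_zero (hsum : a + b + c = 0)
    (hpairs : a * b + b * c + c * a = 0) : a ^ 3 = b ^ 3 := by
  linear_combination (a - b) * ((a + b) * hsum - hpairs)

end SymmetricFunctions

section RootsOfUnity

variable {F : Type*} [Field F]

lemma eq_of_pow_eq_pow_of_forall_pow_eq_one {k m : ℕ}
    (hroot : ∀ ω : F, ω ^ k = 1 → ω ^ m = 1 → ω = 1) {a b : F} (hb : b ≠ 0)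
    (hk : a ^ k = b ^ k) (hm : a ^ m = b ^ m) : a = b := by
  have hdiv {j : ℕ} (hj : a ^ j = b ^ j) : (a / b) ^ j = 1 := by
    rw [div_pow, hj, div_self (pow_ne_zero j hb)]
  exact (div_eq_one_iff_eq hb).1 (hroot _ (hdiv hk) (hdiv hm))

lemma add_add_ne_zero_of_pow_succ_eq {q : ℕ} {σ : F →+* F} (hσ : ∀ x, σ x = x ^ q)
    (h3 : (3 : F) ≠ 0) (hroot : ∀ ω : F, ω ^ 3 = 1 → ω ^ (q + 1) = 1 → ω = 1)
    {a b c n : F} (hn : n ≠ 0) (ha : a ^ (q + 1) = n) (hb : b ^ (q + 1) = n)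
    (hc : c ^ (q + 1) = n) : a + b + c ≠ 0 := by
  intro hsum
  have hc0 : c ≠ 0 := (pow_ne_zero_iff q.succ_ne_zero).1 (hc ▸ hn)
  have map_mul_self {x : F} (hx : x ^ (q + 1) = n) : σ x * x = n := by rw [hσ, ← pow_succ, hx]
  have hpairs : a * b + b * c + c * a = 0 :=
    mul_add_mul_add_mul_eq_zero_of_map_mul_self_eq σ hn (map_mul_self ha) (map_mul_self hb)
      (map_mul_self hc) hsum
  have hcube_ac : a ^ 3 = c ^ 3 :=
    pow_three_eq_pow_three_of_symmetric_eq_zero (b := c) (c := b)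
      (by linear_combination hsum) (by linear_combination hpairs)
  have hcube_bc : b ^ 3 = c ^ 3 :=
    pow_three_eq_pow_three_of_symmetric_eq_zero (c := a)
      (by linear_combination hsum) (by linear_combination hpairs)
  have hac : a = c := eq_of_pow_eq_pow_of_forall_pow_eq_one hroot hc0 hcube_ac (ha.trans hc.symm)
  have hbc : b = c := eq_of_pow_eq_pow_of_forall_pow_eq_one hroot hc0 hcube_bc (hb.trans hc.symm)
  rw [hac, hbc] at hsum
  exact mul_ne_zero h3 hc0 (by linear_combination hsum)

end RootsOfUnity

section FiniteField

variable {F : Type*} [Field F] [Fintype F]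

lemma exists_ringHom_eq_pow {q n : ℕ} (hq : IsPrimePow q) (hF : Fintype.card F = q ^ n) :
    ∃ σ : F →+* F, ∀ x, σ x = x ^ q := by
  obtain ⟨p, k, hp, -, rfl⟩ := hq
  have : Fact p.Prime := ⟨hp.nat_prime⟩
  have : CharP F p := charP_of_card_eq_prime_pow (hF.trans (pow_mul p k n).symm)
  exact ⟨iterateFrobenius F p k, iterateFrobenius_def p k⟩

lemma natCast_ne_zero_of_coprime_card {m : ℕ} (hm : (Fintype.card F).Coprime m) : (m : F) ≠ 0 :=
  (ne_zero_or_ne_zero_of_nat_coprime hm).resolve_left (not_not.2 (FiniteField.cast_card_eq_zero F))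

end FiniteField

section HermitianForm

variable {F : Type*} [Field F] {q d : ℕ} {B : Fin d → Fin d → F}

lemma hermInner_sum_smul_left {σ : F →+* F} (hσ : ∀ x, σ x = x ^ q) {ι : Type*} (s : Finset ι)
    (x : ι → F) (w : ι → Fin d → F) (v : Fin d → F) :
    hermInner q (∑ i ∈ s, x i • w i) v = ∑ i ∈ s, x i ^ q * hermInner q (w i) v := by
  simp only [hermInner, ← hσ, Finset.sum_apply, Pi.smul_apply, smul_eq_mul, map_sum, map_mul,
    Finset.sum_mul, Finset.mul_sum, mul_assoc]
  exact Finset.sum_comm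

lemma isON_single (hq : q ≠ 0) : IsON q fun i : Fin d ↦ Pi.single i (1 : F) := by
  intro i j
  simp [hermInner, Pi.single_apply, ite_pow, zero_pow hq, eq_comm]

lemma IsON.sum_hermInner_smul (hB : IsON q B) (v : Fin d → F) :
    ∑ i, hermInner q (B i) v • B i = v := by
  let M : Matrix (Fin d) (Fin d) F := Matrix.of B
  let A : Matrix (Fin d) (Fin d) F := M.map (· ^ q)
  have hAM : A * M.transpose = 1 := Matrix.ext hB
  have hMA : M.transpose * A = 1 := mul_eq_one_comm.1 hAM
  calc ∑ i, hermInner q (B i) v • B i = Matrix.vecMul (A.mulVec v) M :=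
        (Matrix.vecMul_eq_sum _ _).symm
    _ = M.transpose.mulVec (A.mulVec v) := (Matrix.mulVec_transpose _ _).symm
    _ = v := by rw [Matrix.mulVec_mulVec, hMA, Matrix.one_mulVec]

lemma IsON.hermInner_eq_sum {σ : F →+* F} (hσ : ∀ x, σ x = x ^ q) (hB : IsON q B)
    (u v : Fin d → F) :
    hermInner q u v = ∑ i, hermInner q (B i) u ^ q * hermInner q (B i) v := by
  rw [← hermInner_sum_smul_left hσ, hB.sum_hermInner_smul]

lemma IsON.hermInner_ne_zero_of_pow_succ_eq {σ : F →+* F} (hσ : ∀ x, σ x = x ^ q)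
    (h3 : (3 : F) ≠ 0) (hroot : ∀ ω : F, ω ^ 3 = 1 → ω ^ (q + 1) = 1 → ω = 1)
    {B : Fin 3 → Fin 3 → F} (hB : IsON q B) {u v : Fin 3 → F} {m n : F} (hm : m ≠ 0) (hn : n ≠ 0)
    (hu : ∀ i, hermInner q (B i) u ^ (q + 1) = m)
    (hv : ∀ i, hermInner q (B i) v ^ (q + 1) = n) : hermInner q u v ≠ 0 := by
  have hnorm (i) : (hermInner q (B i) u ^ q * hermInner q (B i) v) ^ (q + 1) = m ^ q * n := by
    rw [mul_pow, pow_right_comm, hu, hv]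
  rw [hB.hermInner_eq_sum hσ, Fin.sum_univ_three]
  exact add_add_ne_zero_of_pow_succ_eq hσ h3 hroot (mul_ne_zero (pow_ne_zero q hm) hn)
    (hnorm 0) (hnorm 1) (hnorm 2)

end HermitianForm

theorem stmt16_general {q : ℕ} {F : Type*} [Field F] {σ : F →+* F} (hσ : ∀ x, σ x = x ^ q)
    (h3 : (3 : F) ≠ 0) (hroot : ∀ ω : F, ω ^ 3 = 1 → ω ^ (q + 1) = 1 → ω = 1) :
    (∀ B C : Fin 3 → Fin 3 → F, IsON q B → IsON q C → ¬ IsMUB q B C)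
    ∧ ∃ B : Fin 3 → Fin 3 → F, IsON q B := by
  have hq0 : q ≠ 0 := by
    rintro rfl
    simpa using hσ 0
  refine ⟨fun B C hB hC hBC ↦ ?_, _, isON_single hq0⟩
  have hnorm : ((3 : ℕ) : F)⁻¹ ≠ 0 := inv_ne_zero (mod_cast h3)
  exact hB.hermInner_ne_zero_of_pow_succ_eq hσ h3 hroot hnorm hnorm
    (fun i ↦ hBC i 0) (fun i ↦ hBC i 1) (hC 0 1)

/-- For a prime power `q` coprime to `3` with `q ≡ 1 (mod 3)`, no two
orthonormal bases of `𝔽_{q²}^3` are mutually unbiased to each other; that is,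
`M_3(𝔽_{q²}) = 1` (an orthonormal basis does exist). -/
theorem stmt16 (q : ℕ) (hq : IsPrimePow q) (hcop : Nat.Coprime q 3) (hmod : q % 3 = 1)
    (F : Type) [Field F] [Fintype F] (hF : Fintype.card F = q ^ 2) :
    (∀ B C : Fin 3 → Fin 3 → F, IsON q B → IsON q C → ¬ IsMUB q B C)
    ∧ ∃ B : Fin 3 → Fin 3 → F, IsON q B := by
  obtain ⟨σ, hσ⟩ := exists_ringHom_eq_pow hq hF
  have h3 : ((3 : ℕ) : F) ≠ 0 := natCast_ne_zero_of_coprime_card (hF ▸ hcop.pow_left 2)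
  have hcop' : Nat.Coprime 3 (q + 1) := (Nat.Prime.coprime_iff_not_dvd Nat.prime_three).2 (by lia)
  exact stmt16_general hσ (mod_cast h3) fun ω h h' ↦ (pow_eq_one_iff_of_coprime hcop').1 ⟨h, h'⟩
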